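/- Let I ⊆ R = K[x₁,…,xₙ] be a monomial ideal. If I^m is integrally closed for every m with 1 ≤ m ≤ n−1, then I is normal, i.e., I^m is integrally closed for all m ≥ 1. -/

import Mathlib

open Finset

/-- `x` is integral over the ideal `I`: it satisfies an equation
`x^m + a₁ x^{m-1} + ⋯ + a_m = 0` with `a_k ∈ I^k`. -/
def IsIntegralOverIdeal {A : Type*} [CommRing A] (I : Ideal A) (x : A) : Prop :=
  ∃ m : ℕ, 0 < m ∧ ∃ a : ℕ → A,
    (∀ k ∈ Finset.Icc 1 m, a k ∈ I ^ k) ∧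
    x ^ m + ∑ k ∈ Finset.Icc 1 m, a k * x ^ (m - k) = 0

/-- An ideal is integrally closed if it contains every element integral over it. -/
def IsIntegrallyClosedIdeal {A : Type*} [CommRing A] (I : Ideal A) : Prop :=
  ∀ x : A, IsIntegralOverIdeal I x → x ∈ I

/-- An ideal is normal if all its positive powers are integrally closed. -/
def IsNormalIdeal {A : Type*} [CommRing A] (I : Ideal A) : Prop :=
  ∀ m : ℕ, 0 < m → IsIntegrallyClosedIdeal (I ^ m)

section Aux

open MvPolynomial

/-- Reduction of a nonnegative combination of nonzero vectors to one with small support. -/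
lemma aux_LP {n : ℕ} (N : ℕ) : ∀ (T : Finset (Fin n →₀ ℕ)), T.card = N →
    ∀ (l : (Fin n →₀ ℕ) → ℚ), (∀ s ∈ T, 0 ≤ l s) → (∀ s ∈ T, s ≠ 0) →
    ∃ T' ⊆ T, ∃ l' : (Fin n →₀ ℕ) → ℚ, T'.card ≤ n ∧ (∀ s ∈ T', 0 ≤ l' s) ∧
      ∑ s ∈ T, l s ≤ ∑ s ∈ T', l' s ∧
      ∀ i, ∑ s ∈ T', l' s * (s i : ℚ) = ∑ s ∈ T, l s * (s i : ℚ) := by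
  induction N with
  | zero =>
    intro T hT l hl _
    exact ⟨T, subset_rfl, l, by omega, hl, le_rfl, fun _ => rfl⟩
  | succ N ih =>
    intro T hT l hl h0
    by_cases hc : T.card ≤ n
    · exact ⟨T, subset_rfl, l, hc, hl, le_rfl, fun _ => rfl⟩
    have hdep : ¬ LinearIndepOn ℚ (fun (s : Fin n →₀ ℕ) (i : Fin n) => (s i : ℚ)) (T : Set _) := by
      intro hli
      have := LinearIndependent.fintype_card_le_finrank hli
      simp at this
      omega
    rw [linearIndepOn_finset_iff] at hdep
    push Not at hdep
    obtain ⟨c0, hc0, s1, hs1, hne⟩ := hdep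
    have key : ∃ c : (Fin n →₀ ℕ) → ℚ, (∀ i, ∑ s ∈ T, c s * (s i : ℚ) = 0) ∧ c s1 ≠ 0 ∧
        0 ≤ ∑ s ∈ T, c s := by
      have h1 : ∀ i, ∑ s ∈ T, c0 s * (s i : ℚ) = 0 := by
        intro i
        have := congrFun hc0 i
        simpa [Finset.sum_apply] using this
      rcases le_total 0 (∑ s ∈ T, c0 s) with h | h
      · exact ⟨c0, h1, hne, h⟩
      · refine ⟨fun s => - c0 s, fun i => ?_, neg_ne_zero.2 hne, ?_⟩
        · simp [h1 i]
        · simpa using h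
    obtain ⟨c, hc1, hcs, hcsum⟩ := key
    have hneg : ∃ s ∈ T, c s < 0 := by
      by_contra! hcon
      have hs1' := h0 s1 hs1
      obtain ⟨i, hi⟩ := Finsupp.ne_iff.1 hs1'
      have := (Finset.sum_eq_zero_iff_of_nonneg (fun s hs =>
        mul_nonneg (hcon s hs) (Nat.cast_nonneg (s i)))).1 (hc1 i) s1 hs1
      rcases mul_eq_zero.1 this with h | h
      · exact hcs h
      · exact hi (by simpa using h)
    obtain ⟨s0, hs0, hmin⟩ := Finset.exists_min_image (T.filter (fun s => c s < 0))
      (fun s => l s / (- c s)) (by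
        obtain ⟨s, hs, hs'⟩ := hneg
        exact ⟨s, by simp [hs, hs']⟩)
    rw [Finset.mem_filter] at hs0
    obtain ⟨hs0T, hs0c⟩ := hs0
    set t := l s0 / (- c s0) with ht
    have ht0 : 0 ≤ t := div_nonneg (hl _ hs0T) (by linarith)
    let l2 : (Fin n →₀ ℕ) → ℚ := fun s => l s + t * c s
    have hz : l2 s0 = 0 := by
      simp only [l2, ht]
      have : c s0 ≠ 0 := hs0c.ne
      field_simp
      ring
    have hl2 : ∀ s ∈ T, 0 ≤ l2 s := by
      intro s hs
      by_cases h : c s < 0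
      · have h2 := hmin s (by simp [hs, h])
        rw [le_div_iff₀ (by linarith)] at h2
        simp only [l2]
        linarith
      · push Not at h
        have := hl s hs
        have := mul_nonneg ht0 h
        simp only [l2]
        linarith
    obtain ⟨T', hT', l', a1, a2, a3, a4⟩ := ih (T.erase s0) (by
      rw [Finset.card_erase_of_mem hs0T]; omega) l2
      (fun s hs => hl2 s (Finset.mem_of_mem_erase hs)) (fun s hs => h0 s (Finset.mem_of_mem_erase hs))
    refine ⟨T', hT'.trans (Finset.erase_subset _ _), l', a1, a2, ?_, ?_⟩
    · rw [Finset.sum_erase _ hz] at a3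
      refine le_trans ?_ a3
      simp only [l2, Finset.sum_add_distrib, ← Finset.mul_sum]
      have := mul_nonneg ht0 hcsum
      linarith
    · intro i
      rw [a4 i, Finset.sum_erase _ (by simp [hz])]
      simp only [l2, add_mul, Finset.sum_add_distrib, mul_assoc, ← Finset.mul_sum, hc1 i]
      simp

variable {K : Type*} [Field K] {n : ℕ}

/-- Exponents occurring in a power of a monomial ideal. -/
lemma aux_forward (S : Set (Fin n →₀ ℕ)) (k : ℕ) : ∀ f ∈
    (Ideal.span ((fun α => monomial α (1 : K)) '' S)) ^ k, ∀ a ∈ f.support,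
    ∃ v : (Fin n →₀ ℕ) →₀ ℕ, (∀ s ∈ v.support, s ∈ S) ∧ v.sum (fun _ c => c) = k ∧
      v.sum (fun s c => c • s) ≤ a := by
  classical
  induction k with
  | zero =>
    intro f _ a _
    exact ⟨0, by simp, by simp, by simp⟩
  | succ k ih =>
    intro f hf
    rw [pow_succ] at hf
    refine Submodule.mul_induction_on hf ?_ ?_
    · intro g hg h hh a ha
      obtain ⟨b, hb, c, hc, rfl⟩ := Finset.mem_add.1 (MvPolynomial.support_mul g h ha)
      obtain ⟨v, h1, h2, h3⟩ := ih g hg b hb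
      obtain ⟨s, hs, hsc⟩ := mem_ideal_span_monomial_image.1 hh c hc
      refine ⟨v + Finsupp.single s 1, ?_, ?_, ?_⟩
      · intro t ht
        rcases Finset.mem_union.1 (Finsupp.support_add ht) with h | h
        · exact h1 t h
        · have := Finsupp.support_single_subset h
          rw [Finset.mem_singleton] at this
          exact this ▸ hs
      · rw [Finsupp.sum_add_index' (by simp) (by simp), h2]
        simp
      · rw [Finsupp.sum_add_index' (by simp) (by simp [add_smul])]
        simp only [zero_smul, Finsupp.sum_single_index, one_smul]
        exact add_le_add h3 hsc
    · intro x y hx hy a ha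
      rcases Finset.mem_union.1 (MvPolynomial.support_add ha) with h | h
      · exact hx a h
      · exact hy a h

lemma aux_backward (I : Ideal (MvPolynomial (Fin n) K)) (v : (Fin n →₀ ℕ) → ℕ)
    (T : Finset (Fin n →₀ ℕ)) (hT : ∀ s ∈ T, monomial s (1 : K) ∈ I) :
    monomial (∑ s ∈ T, v s • s) (1 : K) ∈ I ^ (∑ s ∈ T, v s) := by
  classical
  induction T using Finset.induction_on with
  | empty => simp
  | insert s T hs ih =>
    rw [Finset.sum_insert hs, Finset.sum_insert hs, pow_add]
    have : monomial (v s • s + ∑ s ∈ T, v s • s) (1 : K) =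
      (monomial s 1) ^ (v s) * monomial (∑ s ∈ T, v s • s) (1 : K) := by
      rw [monomial_pow, monomial_mul]; simp
    rw [this]
    exact Ideal.mul_mem_mul (Ideal.pow_mem_pow (hT s (by simp)) _)
      (ih fun t ht => hT t (by simp [ht]))

lemma aux_mono_of_le (J : Ideal (MvPolynomial (Fin n) K)) {a b : Fin n →₀ ℕ} (hab : a ≤ b)
    (h : monomial a (1 : K) ∈ J) : monomial b (1 : K) ∈ J := by
  have : monomial b (1 : K) = monomial (b - a) 1 * monomial a 1 := by
    rw [monomial_mul, tsub_add_cancel_of_le hab, one_mul]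
  rw [this]
  exact J.mul_mem_left _ h

/-- Powers of monomial ideals are monomial. -/
lemma aux_mono (S : Set (Fin n →₀ ℕ)) (k : ℕ) (f : MvPolynomial (Fin n) K) (hf : f ∈
    (Ideal.span ((fun α => monomial α (1 : K)) '' S)) ^ k) (a : Fin n →₀ ℕ) (ha : a ∈ f.support) :
    monomial a (1 : K) ∈ (Ideal.span ((fun α => monomial α (1 : K)) '' S)) ^ k := by
  obtain ⟨v, h1, h2, h3⟩ := aux_forward S k f hf a ha
  refine aux_mono_of_le _ h3 ?_
  rw [← h2]
  exact aux_backward _ v v.support fun s hs => Ideal.subset_span ⟨s, h1 s hs, rfl⟩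

/-- rational version of `aux_backward` -/
lemma aux_clear (I : Ideal (MvPolynomial (Fin n) K)) (l : (Fin n →₀ ℕ) → ℚ)
    (T : Finset (Fin n →₀ ℕ)) (hT : ∀ s ∈ T, monomial s (1 : K) ∈ I)
    (hl : ∀ s ∈ T, 0 ≤ l s) (b : Fin n →₀ ℕ) (r : ℕ) (hr : (r : ℚ) ≤ ∑ s ∈ T, l s)
    (hb : ∀ i, ∑ s ∈ T, l s * (s i : ℚ) ≤ b i) :
    ∃ D : ℕ, 0 < D ∧ monomial (D • b) (1 : K) ∈ I ^ (r * D) := by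
  classical
  have hD : ∃ D : ℕ, 0 < D ∧ ∀ s ∈ T, ∃ v : ℕ, (v : ℚ) = D * l s := by
    refine ⟨∏ s ∈ T, (l s).den, Finset.prod_pos fun s _ => (l s).den_pos, fun s hs => ?_⟩
    obtain ⟨q, hq⟩ := Finset.dvd_prod_of_mem (fun s => (l s).den) hs
    refine ⟨q * (l s).num.toNat, ?_⟩
    rw [hq]
    have h1 : (((l s).num.toNat : ℤ) : ℚ) = (l s).num := by
      rw [Int.toNat_of_nonneg (Rat.num_nonneg.2 (hl s hs))]
    have h2 := Rat.den_mul_eq_num (l s)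
    push_cast at h1 ⊢
    rw [h1, ← h2]
    ring
  obtain ⟨D, hD0, hv⟩ := hD
  choose! v hv using hv
  refine ⟨D, hD0, ?_⟩
  have h1 : r * D ≤ ∑ s ∈ T, v s := by
    have : ((r * D : ℕ) : ℚ) ≤ ((∑ s ∈ T, v s : ℕ) : ℚ) := by
      push_cast
      rw [Finset.sum_congr rfl hv, ← Finset.mul_sum, mul_comm]
      gcongr
    exact_mod_cast this
  refine Ideal.pow_le_pow_right h1 (aux_mono_of_le _ ?_ (aux_backward I v T hT))
  intro i
  have : ((∑ s ∈ T, v s * s i : ℕ) : ℚ) ≤ ((D * b i : ℕ) : ℚ) := by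
    push_cast
    rw [Finset.sum_congr rfl (fun s hs => by rw [hv s hs, mul_assoc]), ← Finset.mul_sum]
    gcongr
    exact hb i
  have := Nat.cast_le.1 this
  simpa [Finsupp.finsetSum_apply] using this

/-- the grading homomorphism -/
noncomputable def auxDelta (K : Type*) [Field K] (n : ℕ) : MvPolynomial (Fin n) K →+*
    MvPolynomial (Fin n) (Polynomial (MvPolynomial (Fin n) K)) :=
  eval₂Hom (C.comp (Polynomial.C.comp C)) (fun i => C (Polynomial.C (X i)) * X i)

lemma auxDelta_monomial (a : Fin n →₀ ℕ) (c : K) :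
    auxDelta K n (monomial a c) = monomial a (Polynomial.C (monomial a c)) := by
  rw [auxDelta, coe_eval₂Hom, eval₂_monomial, monomial_eq (s := a)
    (a := (Polynomial.C (monomial a c) : Polynomial (MvPolynomial (Fin n) K))), monomial_eq (s := a) (a := c)]
  simp only [Finsupp.prod, mul_pow, Finset.prod_mul_distrib, map_mul, map_prod, map_pow,
    RingHom.comp_apply]
  ring

lemma auxDelta_coeff (f : MvPolynomial (Fin n) K) (a : Fin n →₀ ℕ) :
    (auxDelta K n f).coeff a = Polynomial.C (monomial a (f.coeff a)) := by
  classical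
  induction f using MvPolynomial.induction_on' with
  | monomial b c =>
    rw [auxDelta_monomial, coeff_monomial, coeff_monomial]
    split_ifs with h
    · rw [h]
    · simp
  | add p q hp hq =>
    rw [map_add, coeff_add, hp, hq, coeff_add, map_add, map_add]

attribute [local instance] MvPolynomial.algebraMvPolynomial

lemma aux_isIntegral (J : Ideal (MvPolynomial (Fin n) K))
    (hJ : ∀ k, ∀ f ∈ J ^ k, ∀ a ∈ f.support, monomial a (1 : K) ∈ J ^ k)
    (f : MvPolynomial (Fin n) K) (hf : IsIntegralOverIdeal J f) (a : Fin n →₀ ℕ) :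
    IsIntegral (reesAlgebra J) (Polynomial.monomial 1 (monomial a (f.coeff a))) := by
  obtain ⟨m, hm, b, hb, heq⟩ := hf
  have hco : ∀ k (g : MvPolynomial (Fin n) K) a,
      coeff a (auxDelta K n g * C (Polynomial.X ^ k)) = Polynomial.monomial k (monomial a (g.coeff a)) := by
    intro k g a
    rw [mul_comm, coeff_C_mul, mul_comm, auxDelta_coeff, Polynomial.C_mul_X_pow_eq_monomial]
  have hB : ∀ k ∈ Finset.Icc 1 m, ∃ B : MvPolynomial (Fin n) (reesAlgebra J),
      map (algebraMap (reesAlgebra J) _) B = auxDelta K n (b k) * C (Polynomial.X ^ k) := by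
    intro k hk
    rw [← Set.mem_range, MvPolynomial.mem_range_map_iff_coeffs_subset]
    intro z hz
    rw [Finset.mem_coe, MvPolynomial.mem_coeffs_iff] at hz
    obtain ⟨a, ha, rfl⟩ := hz
    rw [hco]
    refine ⟨⟨_, reesAlgebra.monomial_mem.2 ?_⟩, rfl⟩
    by_cases h0 : (b k).coeff a = 0
    · simp [h0]
    · have := hJ k _ (hb k hk) a (mem_support_iff.2 h0)
      have h2 := (J ^ k).mul_mem_left (C ((b k).coeff a)) this
      rwa [C_mul_monomial, mul_one] at h2
  choose! B hB using hB
  have key : IsIntegral (MvPolynomial (Fin n) (reesAlgebra J))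
      (auxDelta K n f * C (Polynomial.X ^ 1)) := by
    refine ⟨Polynomial.X ^ m + ∑ k ∈ Finset.Icc 1 m, Polynomial.C (B k) * Polynomial.X ^ (m - k),
      ?_, ?_⟩
    · refine Polynomial.monic_X_pow_add ?_
      refine (Polynomial.degree_sum_le _ _).trans_lt ?_
      rw [Finset.sup_lt_iff (by exact WithBot.bot_lt_coe m)]
      intro k hk
      refine (Polynomial.degree_C_mul_X_pow_le _ _).trans_lt ?_
      rw [Finset.mem_Icc] at hk
      exact_mod_cast (by omega : m - k < m)
    · rw [Polynomial.eval₂_add, Polynomial.eval₂_finsetSum, Polynomial.eval₂_X_pow]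
      have h1 := congrArg (fun z => auxDelta K n z * C (Polynomial.X ^ m)) heq
      simp only [map_zero, zero_mul] at h1
      rw [← h1, map_add, add_mul, map_sum, Finset.sum_mul]
      congr 1
      · simp only [map_pow, pow_one, mul_pow]
      · refine Finset.sum_congr rfl fun k hk => ?_
        rw [Polynomial.eval₂_mul, Polynomial.eval₂_C, Polynomial.eval₂_X_pow,
          MvPolynomial.algebraMap_def, hB k hk]
        rw [Finset.mem_Icc] at hk
        obtain ⟨j, rfl⟩ := Nat.exists_eq_add_of_le hk.2
        simp only [map_mul, map_pow, Nat.add_sub_cancel_left, pow_add]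
        ring
  have := MvPolynomial.isIntegral_iff_isIntegral_coeff.1 key a
  rwa [hco] at this

lemma aux_extract (J : Ideal (MvPolynomial (Fin n) K))
    (hJ : ∀ k, ∀ f ∈ J ^ k, ∀ a ∈ f.support, monomial a (1 : K) ∈ J ^ k)
    (a : Fin n →₀ ℕ) (c : K) (hc : c ≠ 0)
    (h : IsIntegral (reesAlgebra J) (Polynomial.monomial 1 (monomial a c))) :
    ∃ k, 0 < k ∧ monomial (k • a) (1 : K) ∈ J ^ k := by
  classical
  obtain ⟨p, hp, he⟩ := h
  by_contra! hcon
  rw [Polynomial.eval₂_eq_sum_range] at he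
  have h1 := congrArg (fun z => coeff (p.natDegree • a) (Polynomial.coeff z p.natDegree)) he
  simp only [Polynomial.finsetSum_coeff, Polynomial.coeff_zero, coeff_zero, coeff_sum,
    Polynomial.monomial_pow, one_mul, monomial_pow] at h1
  rw [Finset.sum_range_succ, Finset.sum_eq_zero] at h1
  · rw [zero_add, Polynomial.coeff_natDegree, hp] at h1
    simp at h1
    exact hc h1.1
  · intro i hi
    rw [Finset.mem_range] at hi
    obtain ⟨j, hj⟩ := Nat.exists_eq_add_of_le hi.le
    have hmem : (algebraMap (reesAlgebra J) _ (p.coeff i) : Polynomial _).coeff j ∈ J ^ j :=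
      (p.coeff i).2 j
    rw [hj, add_comm i j, Polynomial.coeff_mul_monomial, add_smul, coeff_mul_monomial]
    by_contra hne
    exact hcon j (by omega) (hJ j _ hmem (j • a) (mem_support_iff.2 (left_ne_zero_of_mul hne)))

lemma aux_mem_of_monomials (J : Ideal (MvPolynomial (Fin n) K)) (f : MvPolynomial (Fin n) K)
    (h : ∀ a ∈ f.support, monomial a (1 : K) ∈ J) : f ∈ J := by
  rw [f.as_sum]
  refine J.sum_mem fun a ha => ?_
  have h2 := J.mul_mem_left (C (f.coeff a)) (h a ha)
  rwa [C_mul_monomial, mul_one] at h2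

lemma aux_step (S : Set (Fin n →₀ ℕ)) (h0 : (0 : Fin n →₀ ℕ) ∉ S) (m : ℕ) (hmn : n ≤ m + 1)
    (hc : IsIntegrallyClosedIdeal
      ((Ideal.span ((fun α => monomial α (1 : K)) '' S)) ^ m)) :
    IsIntegrallyClosedIdeal ((Ideal.span ((fun α => monomial α (1 : K)) '' S)) ^ (m + 1)) := by
  classical
  intro f hf
  set I := Ideal.span ((fun α => monomial α (1 : K)) '' S) with hI
  refine aux_mem_of_monomials _ _ fun a ha => ?_
  have hJ : ∀ k, ∀ f ∈ (I ^ (m + 1)) ^ k, ∀ a ∈ f.support,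
      monomial a (1 : K) ∈ (I ^ (m + 1)) ^ k := by
    intro k f hf a ha
    rw [← pow_mul] at hf ⊢
    exact aux_mono S _ f hf a ha
  obtain ⟨k, hk, hka⟩ := aux_extract _ hJ a _ (mem_support_iff.1 ha) (aux_isIntegral _ hJ f hf a)
  rw [← pow_mul] at hka
  obtain ⟨v, hvS, hvsum, hvle⟩ := aux_forward S _ _ hka (k • a) (by simp)
  have hkq : (0 : ℚ) < k := by exact_mod_cast hk
  obtain ⟨T, hT, l, hTn, hl, hsum, hle⟩ := aux_LP v.support.card v.support rfl
    (fun s => (v s : ℚ) / k) (fun s _ => by positivity)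
    (fun s hs h => h0 (h ▸ hvS s hs))
  have hsum' : ((m + 1 : ℕ) : ℚ) ≤ ∑ s ∈ T, l s := by
    refine le_trans (le_of_eq ?_) hsum
    rw [← Finset.sum_div, eq_div_iff hkq.ne', ← Nat.cast_sum]
    exact_mod_cast hvsum.symm
  have hle' : ∀ i, ∑ s ∈ T, l s * (s i : ℚ) ≤ a i := by
    intro i
    rw [hle i]
    have h1 := hvle i
    simp only [Finsupp.sum, Finsupp.finsetSum_apply, Finsupp.smul_apply, smul_eq_mul] at h1
    have h2 : ((∑ s ∈ v.support, v s * s i : ℕ) : ℚ) ≤ ((k * a i : ℕ) : ℚ) := by exact_mod_cast h1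
    push_cast at h2
    simp only [div_mul_eq_mul_div]
    rw [← Finset.sum_div, div_le_iff₀ hkq]
    linarith
  -- pigeonhole
  have hpig : ∃ s ∈ T, 1 ≤ l s := by
    by_contra! hcon
    rcases T.eq_empty_or_nonempty with rfl | hne
    · rw [Finset.sum_empty] at hsum'
      have : (0 : ℚ) < ((m + 1 : ℕ) : ℚ) := by positivity
      linarith
    · have h1 := Finset.sum_lt_sum_of_nonempty hne hcon
      have h2 : (T.card : ℚ) ≤ ((m + 1 : ℕ) : ℚ) := by exact_mod_cast hTn.trans hmn
      simp at h1
      push_cast at *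
      linarith
  obtain ⟨s, hs, hs1⟩ := hpig
  have hsS : s ∈ S := hvS s (hT hs)
  have hsa : s ≤ a := by
    intro i
    have h1 : l s * (s i : ℚ) ≤ ∑ s ∈ T, l s * (s i : ℚ) :=
      Finset.single_le_sum (f := fun s : Fin n →₀ ℕ => l s * (s i : ℚ))
        (fun t ht => mul_nonneg (hl t ht) (Nat.cast_nonneg _)) hs
    have h2 := hle' i
    have h3 : (s i : ℚ) ≤ l s * (s i : ℚ) := le_mul_of_one_le_left (Nat.cast_nonneg _) hs1
    exact_mod_cast h3.trans (h1.trans h2)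
  have hgen : ∀ t ∈ S, monomial t (1 : K) ∈ I := fun t ht => Ideal.subset_span ⟨t, ht, rfl⟩
  obtain ⟨D, hD, hDm⟩ := aux_clear I (fun t => l t - if t = s then 1 else 0) T
    (fun t ht => hgen t (hvS t (hT ht)))
    (fun t ht => by
      split_ifs with h
      · rw [h]; linarith
      · simpa using hl t ht) (a - s) m (by
      rw [Finset.sum_sub_distrib, Finset.sum_ite_eq' T s, if_pos hs]
      push_cast at hsum'
      linarith) (by
      intro i
      simp only [sub_mul, Finset.sum_sub_distrib, ite_mul, one_mul, zero_mul]
      rw [Finset.sum_ite_eq' T s, if_pos hs, Finsupp.tsub_apply, Nat.cast_sub (hsa i)]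
      have := hle' i
      linarith)
  have hmemb : monomial (a - s) (1 : K) ∈ I ^ m := by
    apply hc
    refine ⟨D, hD, fun j => if j = D then - monomial (D • (a - s)) (1 : K) else 0, ?_, ?_⟩
    · intro j _
      dsimp only
      split_ifs with h
      · rw [h, ← pow_mul]
        exact neg_mem hDm
      · exact zero_mem _
    · simp only [ite_mul, zero_mul]
      rw [Finset.sum_ite_eq' (Finset.Icc 1 D) D, if_pos (by simp; omega), monomial_pow]
      simp
  have : monomial a (1 : K) = monomial (a - s) 1 * monomial s 1 := by
    rw [monomial_mul, tsub_add_cancel_of_le hsa, one_mul]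
  rw [this, pow_succ]
  exact Ideal.mul_mem_mul hmemb (hgen s hsS)

end Aux

theorem stmt2 {K : Type*} [Field K] {n : ℕ} (I : Ideal (MvPolynomial (Fin n) K))
    (hmono : ∃ S : Set (Fin n →₀ ℕ),
      I = Ideal.span ((fun α => MvPolynomial.monomial α (1 : K)) '' S))
    (h : ∀ m : ℕ, 1 ≤ m → m ≤ n - 1 → IsIntegrallyClosedIdeal (I ^ m)) :
    IsNormalIdeal I := by
  obtain ⟨S, rfl⟩ := hmono
  intro m _
  by_cases h0 : (0 : Fin n →₀ ℕ) ∈ S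
  · have : Ideal.span ((fun α => MvPolynomial.monomial α (1 : K)) '' S) = ⊤ := by
      rw [Ideal.eq_top_iff_one]
      exact Ideal.subset_span ⟨0, h0, rfl⟩
    intro x _
    rw [this, Ideal.top_pow]
    trivial
  induction m with
  | zero => omega
  | succ m ih =>
    by_cases hm : m + 1 ≤ n - 1
    · exact h _ (by omega) hm
    · refine aux_step S h0 m (by omega) ?_
      rcases Nat.eq_zero_or_pos m with rfl | hpos
      · intro x _
        simp
      · exact ih hpos
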